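/- arXiv:2203.00950 — 2 statements merged into one kernel-verified Lean document; each statement's English description precedes it below -/
import Mathlib

section
/- Let G ⊆ ℝ^N be a nonempty open bounded set and δ > 0, p ∈ G with closed ball B[p,δ] ⊆ G, such that cl(G) is strictly star-shaped with respect to every point of B[p,δ]. Let (V_u)_{u∈∂G} be a family of bounding functions for G normalized so that ‖∇V_u(u)‖ = 1 for each u ∈ ∂G. Then ⟨∇V_u(u), p − u⟩ ≤ −δ for all u ∈ ∂G. -/
open Set Metric
open scoped RealInnerProductSpace

/-!
A bounding function at `u` attains its maximum over `G` there, so its derivative at `u` is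
nonpositive in every direction pointing into `G`. By star-shapedness `q - u` is such a direction for
each `q` in the ball around `p`, that is, the linear functional `⟪∇V_u(u), ·⟫` is at most
`⟪∇V_u(u), u⟫` on the whole ball. Its maximum on the ball is `⟪∇V_u(u), p⟫ + δ ‖∇V_u(u)‖`, which
produces the margin `δ`.
-/

theorem openSegment_subset_iff_forall_mem_Ioo {𝕜 E : Type*} [Ring 𝕜] [PartialOrder 𝕜]
    [AddRightMono 𝕜] [AddCommGroup E] [Module 𝕜 E] {x y : E} {s : Set E} :
    openSegment 𝕜 x y ⊆ s ↔ ∀ θ ∈ Ioo (0 : 𝕜) 1, x + θ • (y - x) ∈ s := by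
  rw [openSegment_eq_image', image_subset_iff]
  rfl

theorem isLocalMaxOn_of_forall_mem_inter_ball_le {X β : Type*} [PseudoMetricSpace X] [Preorder β]
    {f : X → β} {s : Set X} {a : X} {r : ℝ} (hr : 0 < r) (hf : ∀ x ∈ s ∩ ball a r, f x ≤ f a) :
    IsLocalMaxOn f s a :=
  Filter.mem_of_superset (inter_mem_nhdsWithin s (ball_mem_nhds a hr)) hf

theorem inner_add_mul_norm_le_of_forall_mem_closedBall {E : Type*} [SeminormedAddCommGroup E]
    [InnerProductSpace ℝ E] {g p : E} {δ c : ℝ} (hδ : 0 ≤ δ)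
    (h : ∀ q ∈ closedBall p δ, ⟪g, q⟫ ≤ c) : ⟪g, p⟫ + δ * ‖g‖ ≤ c := by
  -- If `‖g‖ = 0`, then `δ / ‖g‖ = 0` and the maximizer `p + (δ / ‖g‖) • g` is just `p`.
  have hmem : p + (δ / ‖g‖) • g ∈ closedBall p δ := by
    rw [mem_closedBall, dist_self_add_left, norm_smul, norm_div, norm_norm,
      Real.norm_of_nonneg hδ, div_mul_eq_mul_div]
    exact div_le_of_le_mul₀ (norm_nonneg g) hδ le_rfl
  calc ⟪g, p⟫ + δ * ‖g‖ = ⟪g, p + (δ / ‖g‖) • g⟫ := by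
        rw [inner_add_right, real_inner_smul_right, real_inner_self_eq_norm_mul_norm]
        field_simp
    _ ≤ c := h _ hmem

section Gradient

variable {E : Type*} [NormedAddCommGroup E] [InnerProductSpace ℝ E] [CompleteSpace E]

theorem inner_sub_nonpos_of_isLocalMaxOn {f : E → ℝ} {s : Set E} {g x y : E}
    (hmax : IsLocalMaxOn f s x) (hf : HasGradientWithinAt f g s x)
    (hseg : openSegment ℝ x y ⊆ s) : ⟪g, y - x⟫ ≤ 0 := by
  simpa using hmax.hasFDerivWithinAt_nonpos hf.hasFDerivWithinAt
    (sub_mem_posTangentConeAt_of_openSegment_subset hseg)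

theorem gradient_inner_le_neg_delta_of_strictly_star_shaped_ball_general {G : Set E} {p u g : E}
    {δ : ℝ} (hδ : 0 ≤ δ) (hstar : ∀ q ∈ closedBall p δ, openSegment ℝ q u ⊆ G) {V : E → ℝ}
    (hV : HasGradientWithinAt V g G u) (hmax : IsLocalMaxOn V G u) :
    ⟪g, p - u⟫ ≤ -(δ * ‖g‖) := by
  have hball : ∀ q ∈ closedBall p δ, ⟪g, q⟫ ≤ ⟪g, u⟫ := fun q hq ↦ by
    have hdir := inner_sub_nonpos_of_isLocalMaxOn hmax hV (openSegment_symm ℝ q u ▸ hstar q hq)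
    rwa [inner_sub_right, sub_nonpos] at hdir
  have hsupport := inner_add_mul_norm_le_of_forall_mem_closedBall hδ hball
  rw [inner_sub_right]
  linarith

end Gradient

/-- If `cl G` is strictly star-shaped with respect to every point of
a closed ball `B[p,δ] ⊆ G` and `(V_u)` is a family of bounding functions for `G`
normalized so that `‖∇V_u(u)‖ = 1`, then `⟪∇V_u(u), p - u⟫ ≤ -δ` for all `u ∈ ∂G`. -/
theorem gradient_inner_le_neg_delta_of_strictly_star_shaped_ball
    {N : ℕ} (G : Set (EuclideanSpace ℝ (Fin N)))
    (hne : G.Nonempty) (hG : IsOpen G) (hGb : Bornology.IsBounded G)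
    (p : EuclideanSpace ℝ (Fin N)) (δ : ℝ) (hδ : 0 < δ)
    (hball : closedBall p δ ⊆ G)
    (hstar : ∀ q ∈ closedBall p δ, ∀ u ∈ frontier G,
      ∀ θ : ℝ, 0 ≤ θ → θ < 1 → q + θ • (u - q) ∈ G)
    (r : EuclideanSpace ℝ (Fin N) → ℝ)
    (V : EuclideanSpace ℝ (Fin N) → EuclideanSpace ℝ (Fin N) → ℝ)
    (hbd : ∀ u ∈ frontier G, 0 < r u ∧ ContDiffOn ℝ 1 (V u) (ball u (r u)) ∧
      V u u = 0 ∧ ∀ x ∈ G ∩ ball u (r u), V u x < 0)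
    (hnorm : ∀ u ∈ frontier G, ‖gradient (V u) u‖ = 1) :
    ∀ u ∈ frontier G, ⟪gradient (V u) u, p - u⟫ ≤ -δ := by
  intro u hu
  obtain ⟨hr, hV, hV0, hneg⟩ := hbd u hu
  have hgrad : HasGradientWithinAt (V u) (gradient (V u) u) G u :=
    hasGradientWithinAt_iff_hasFDerivWithinAt.2 <|
      ((hV.differentiableOn one_ne_zero).hasGradientAt
        (ball_mem_nhds u hr)).hasFDerivAt.hasFDerivWithinAt
  have hmax : IsLocalMaxOn (V u) G u :=
    isLocalMaxOn_of_forall_mem_inter_ball_le hr fun x hx ↦ (hneg x hx).le.trans_eq hV0.symm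
  have hseg : ∀ q ∈ closedBall p δ, openSegment ℝ q u ⊆ G := fun q hq ↦
    openSegment_subset_iff_forall_mem_Ioo.2 fun θ hθ ↦ hstar q hq u hu θ hθ.1.le hθ.2
  simpa [hnorm u hu] using
    gradient_inner_le_neg_delta_of_strictly_star_shaped_ball_general hδ.le hseg hgrad hmax
end

section
/- Let Ω ⊆ ℝ^N be open, f : [0,T] × Ω → ℝ^N continuous, and G a nonempty open bounded set with cl(G) ⊆ Ω. Suppose there exist p ∈ G and δ > 0 with B[p,δ] ⊆ G such that cl(G) is strictly star-shaped with respect to every point of B[p,δ]. Let (V_u)_{u∈∂G} be a family of non-degenerate bounding functions for G such that ⟨f(t,u), ∇V_u(u)⟩ ≤ 0 for all u ∈ ∂G and t ∈ [0,T]. Then there exists a differentiable y : [0,T] → Ω with y'(t) = f(t, y(t)) for all t ∈ [0,T], y(0) = y(T), and y(t) ∈ cl(G) for all t ∈ [0,T]. -/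
open Set Metric
open scoped RealInnerProductSpace

/-!
After a translation `p = 0`, and strict star-shapedness makes the gauge `g` of `G` continuous, so
that `ρ x = x / max 1 (g x)` retracts the whole space onto `closure G`. Replace `f` by the bounded
field `F t x = f t (ρ x) - (1 - 1 / max 1 (g x)) • ρ x`. The problem `x' = F t x`, `x 0 = ρ (x T)`
is a fixed point equation for a continuous map into a compact set of curves and has a solution by
Schauder's theorem. If `g ∘ x` had a maximum `c > 1` at a time `b > 0`, then `x / c` would stay in
`closure G` up to time `b`, so its velocity would have a nonnegative product with an outer normal
at `u = x b / c`; but star-shapedness about a whole ball gives `⟪u, n⟫ > 0`, and the damping term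
then makes the product negative. So `g ∘ x ≤ 1`, where the modified field is `f` and `ρ` is the
identity.

Schauder's theorem is reduced to Brouwer's, which rests on Rogers' version of Milnor's argument: for
a Lipschitz `h` vanishing outside a ball, `x ↦ x + t • h x` permutes the ball for small `t`, so the
integral of its Jacobian, a polynomial in `t`, is the volume of the ball, also for `t = 1`; if
`x + h x` had norm constant on the ball, the Jacobian at `t = 1` would vanish instead.
-/

section Determinant

open Module

theorem det_one_add_smul_eq_sum_lagrange {𝕜 V : Type*} [Field 𝕜] [AddCommGroup V] [Module 𝕜 V]
    [FiniteDimensional 𝕜 V] [DecidableEq 𝕜] {s : Finset 𝕜} (hs : finrank 𝕜 V < s.card)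
    (A : V →ₗ[𝕜] V) (t : 𝕜) :
    LinearMap.det (1 + t • A) =
      ∑ i ∈ s, (Lagrange.basis s id i).eval t * LinearMap.det (1 + i • A) := by
  let b := finBasis 𝕜 V
  let M := LinearMap.toMatrix b b A
  let P : Polynomial 𝕜 := ((Polynomial.X : Polynomial 𝕜) • M.map Polynomial.C +
    (1 : Matrix (Fin (finrank 𝕜 V)) (Fin (finrank 𝕜 V)) 𝕜).map Polynomial.C).det
  have eval_P (a : 𝕜) : P.eval a = LinearMap.det (1 + a • A) := by
    rw [← LinearMap.det_toMatrix b, map_add, map_smul, LinearMap.toMatrix_one,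
      ← Polynomial.coe_evalRingHom, RingHom.map_det]
    congr 1
    ext i j
    obtain rfl | hij := eq_or_ne i j
    · simp [M, add_comm, mul_comm a]
    · simp [M, hij, mul_comm a]
  have degree_P : P.degree < s.card := by
    refine Polynomial.degree_le_natDegree.trans_lt (Nat.cast_lt.2 (lt_of_le_of_lt ?_ hs))
    simpa only [Fintype.card_fin] using Polynomial.natDegree_det_X_add_C_le M 1
  rw [← eval_P t, Lagrange.eq_interpolate (s := s) (v := id) (injOn_id _) degree_P,
    Lagrange.interpolate_apply, Polynomial.eval_finsetSum]
  simp [eval_P, mul_comm]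

theorem det_one_add_pos_of_norm_lt_one {E : Type*} [NormedAddCommGroup E] [NormedSpace ℝ E]
    [FiniteDimensional ℝ E] {A : E →L[ℝ] E} (hA : ‖A‖ < 1) : 0 < (1 + A).det := by
  have det_ne_zero (B : E →L[ℝ] E) (hB : ‖B‖ < 1) : (1 + B).det ≠ 0 := by
    intro h
    obtain ⟨v, hv, hv0⟩ := (Submodule.ne_bot_iff _).1 (LinearMap.bot_lt_ker_of_det_eq_zero h).ne'
    have hBv : ‖B v‖ = ‖v‖ := by
      rw [eq_neg_of_add_eq_zero_right (show v + B v = 0 from hv), norm_neg]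
    have : ‖B v‖ < ‖v‖ := (B.le_opNorm v).trans_lt <|
      (mul_lt_iff_lt_one_left (norm_pos_iff.2 hv0)).2 hB
    exact this.ne hBv
  have continuous_det : Continuous fun B : E →L[ℝ] E ↦ (1 + B).det :=
    ContinuousLinearMap.continuous_det.comp (continuous_const.add continuous_id)
  by_contra! hdet
  obtain ⟨B, hB, hB0⟩ := (convex_ball (0 : E →L[ℝ] E) 1).isPreconnected.intermediate_value
    (mem_ball_zero_iff.2 hA) (mem_ball_self one_pos) continuous_det.continuousOn
    (show (0 : ℝ) ∈ Icc _ _ from ⟨hdet, by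
      simp [ContinuousLinearMap.det, ContinuousLinearMap.one_def]⟩)
  exact det_ne_zero B (mem_ball_zero_iff.1 hB) hB0

theorem det_eq_zero_of_norm_eventually_const {E : Type*} [NormedAddCommGroup E]
    [InnerProductSpace ℝ E] [FiniteDimensional ℝ E] {f : E → E} {f' : E →L[ℝ] E} {x : E} {r : ℝ}
    (hf : HasFDerivAt f f' x) (hr : r ≠ 0) (hfr : ∀ᶠ y in nhds x, ‖f y‖ = r) : f'.det = 0 := by
  by_contra hdet
  have hsurj : Function.Surjective (f' : E →ₗ[ℝ] E) :=
    ((Module.End.isUnit_iff _).1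
      ((LinearMap.isUnit_iff_isUnit_det _).2 (isUnit_iff_ne_zero.2 hdet))).2
  obtain ⟨v, hv⟩ := hsurj (f x)
  have hconst : HasFDerivAt (fun y ↦ ‖f y‖ ^ 2) (0 : E →L[ℝ] ℝ) x :=
    (hasFDerivAt_const (r ^ 2) x).congr_of_eventuallyEq (hfr.mono fun y hy ↦ by simp [hy])
  have hinner : 2 • ⟪f x, f' v⟫ = 0 := DFunLike.congr_fun (hf.norm_sq.unique hconst) v
  have hv : f' v = f x := hv
  simp [hv, hfr.self_of_nhds, hr] at hinner

end Determinant

section GaugeRetraction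

open scoped NNReal

variable {E : Type*} [NormedAddCommGroup E] [NormedSpace ℝ E] {S : Set E} {x : E}

/-- The radial retraction onto a set `S` that is star-shaped about the origin: points outside `S`
are pulled back along their ray to gauge one. -/
noncomputable def gaugeRetraction (S : Set E) (x : E) : E := (max 1 (gauge S x))⁻¹ • x

theorem gaugeRetraction_of_gauge_le (h : gauge S x ≤ 1) : gaugeRetraction S x = x := by
  simp [gaugeRetraction, h]

theorem gaugeRetraction_of_le_gauge (h : 1 ≤ gauge S x) :
    gaugeRetraction S x = (gauge S x)⁻¹ • x := by
  simp [gaugeRetraction, h]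

theorem gauge_gaugeRetraction_le (S : Set E) (x : E) : gauge S (gaugeRetraction S x) ≤ 1 := by
  rw [gaugeRetraction, gauge_smul_of_nonneg (by positivity), smul_eq_mul, ← div_eq_inv_mul]
  exact div_le_one_of_le₀ (le_max_right _ _) (by positivity)

theorem gauge_gaugeRetraction_of_le_gauge (h : 1 ≤ gauge S x) :
    gauge S (gaugeRetraction S x) = 1 := by
  rw [gaugeRetraction_of_le_gauge h, gauge_smul_of_nonneg (by positivity), smul_eq_mul,
    inv_mul_cancel₀ (by positivity)]

theorem continuous_gaugeRetraction (h : Continuous (gauge S)) :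
    Continuous (gaugeRetraction S) :=
  ((continuous_const.max h).inv₀ fun _ ↦ by positivity).smul continuous_id

theorem norm_gaugeRetraction_le {C : ℝ} (hS : Absorbent ℝ S) (hC : 0 < C)
    (hSC : S ⊆ closedBall 0 C) (x : E) : ‖gaugeRetraction S x‖ ≤ C := by
  have h := (le_gauge_of_subset_closedBall hS hC.le hSC).trans (gauge_gaugeRetraction_le S x)
  simpa using (div_le_iff₀ hC).1 h

theorem lipschitzWith_gaugeRetraction {K C : ℝ≥0} (hS : Absorbent ℝ S)
    (hK : LipschitzWith K (gauge S)) (hC : 0 < C) (hSC : S ⊆ closedBall 0 C) :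
    LipschitzWith (1 + C * K) (gaugeRetraction S) := by
  refine .of_dist_le_mul fun x y ↦ ?_
  set a := max 1 (gauge S x) with ha
  set b := max 1 (gauge S y) with hb
  have ha1 : 1 ≤ a := le_max_left _ _
  have hab : |b - a| ≤ K * dist x y := by
    rw [abs_sub_comm, ha, hb, max_comm, max_comm 1]
    exact (abs_max_sub_max_le_abs _ _ _).trans (hK.dist_le_mul x y)
  have hsplit : a⁻¹ • x - b⁻¹ • y = a⁻¹ • (x - y) + (a⁻¹ * (b - a)) • b⁻¹ • y := by
    rw [smul_smul, mul_assoc, sub_mul, mul_inv_cancel₀ (by positivity), mul_sub, mul_one,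
      inv_mul_cancel_left₀ (by positivity)]
    module
  calc dist (gaugeRetraction S x) (gaugeRetraction S y)
      = ‖a⁻¹ • (x - y) + (a⁻¹ * (b - a)) • gaugeRetraction S y‖ := by
        rw [dist_eq_norm]; exact congrArg norm hsplit
    _ ≤ a⁻¹ * dist x y + a⁻¹ * |b - a| * ‖gaugeRetraction S y‖ := by
        refine (norm_add_le _ _).trans_eq ?_
        rw [norm_smul, norm_smul, norm_mul, Real.norm_eq_abs, Real.norm_eq_abs, dist_eq_norm,
          abs_of_nonneg (by positivity)]
    _ ≤ 1 * dist x y + 1 * (K * dist x y) * C := by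
        gcongr
        · exact inv_le_one_of_one_le₀ ha1
        · exact inv_le_one_of_one_le₀ ha1
        · exact norm_gaugeRetraction_le hS hC hSC y
    _ = ↑(1 + C * K) * dist x y := by push_cast; ring

theorem lipschitzWith_gaugeRetraction_ball {R : ℝ} (hR : 0 < R) :
    LipschitzWith 2 (gaugeRetraction (ball (0 : E) R)) := by
  lift R to ℝ≥0 using hR.le
  have h := lipschitzWith_gaugeRetraction (absorbent_nhds_zero (ball_mem_nhds (0 : E) hR))
    (Convex.lipschitzWith_gauge (convex_ball _ _) hR subset_rfl) hR ball_subset_closedBall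
  have hR0 : R ≠ 0 := (NNReal.coe_pos.1 hR).ne'
  rwa [mul_inv_cancel₀ hR0, one_add_one_eq_two] at h

theorem gaugeRetraction_ball_of_norm_le {R : ℝ} {x : E} (hR : 0 < R) (hx : ‖x‖ ≤ R) :
    gaugeRetraction (ball 0 R) x = x :=
  gaugeRetraction_of_gauge_le (by rw [gauge_ball hR.le]; exact div_le_one_of_le₀ hx hR.le)

theorem gaugeRetraction_ball_of_le_norm {R : ℝ} {x : E} (hR : 0 < R) (hx : R ≤ ‖x‖) :
    gaugeRetraction (ball 0 R) x = (R / ‖x‖) • x := by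
  have h : 1 ≤ gauge (ball 0 R) x := by rw [gauge_ball hR.le]; exact (one_le_div hR).2 hx
  rw [gaugeRetraction_of_le_gauge h, gauge_ball hR.le, inv_div]

theorem exists_lipschitzWith_norm_eq_of_mem_annulus {c C : ℝ} (hc : 0 < c) (hcC : c ≤ C) :
    ∃ (K : ℝ≥0) (ρ : E → E), LipschitzWith K ρ ∧ (∀ y, C ≤ ‖y‖ → ρ y = y) ∧
      ∀ y, ‖y‖ ∈ Icc c C → ‖ρ y‖ = C := by
  have hC : 0 < C := hc.trans_le hcC
  -- On the annulus the first two terms cancel, leaving the radial projection `(C / ‖y‖) • y`;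
  -- beyond it the last two do.
  refine ⟨1 + 2 + ‖C / c‖₊ * 2, fun y ↦
    y - gaugeRetraction (ball 0 C) y + (C / c) • gaugeRetraction (ball 0 c) y,
    (LipschitzWith.id.sub (lipschitzWith_gaugeRetraction_ball hC)).add
      ((lipschitzWith_smul (C / c)).comp (lipschitzWith_gaugeRetraction_ball hc)),
    fun y hy ↦ ?_, fun y hy ↦ ?_⟩
  · dsimp only
    rw [gaugeRetraction_ball_of_le_norm hC hy,
      gaugeRetraction_ball_of_le_norm hc (hcC.trans hy), smul_smul, div_mul_div_cancel₀ hc.ne',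
      sub_add_cancel]
  · dsimp only
    rw [gaugeRetraction_ball_of_norm_le hC hy.2, gaugeRetraction_ball_of_le_norm hc hy.1,
      smul_smul, sub_self, zero_add, div_mul_div_cancel₀ hc.ne', norm_smul, norm_div, norm_norm,
      div_mul_cancel₀ _ (hc.trans_le hy.1).ne', Real.norm_of_nonneg hC.le]

end GaugeRetraction

theorem exists_isFixedPt_of_forall_exists_dist_le {X : Type*} [MetricSpace X] {φ : X → X}
    {K : Set X} (hφ : Continuous φ) (hK : IsCompact K) (hφK : ∀ x, φ x ∈ K)
    (happrox : ∀ ε > 0, ∃ x, dist x (φ x) ≤ ε) : ∃ x, Function.IsFixedPt φ x := by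
  choose x hx using fun n : ℕ ↦ happrox (1 / (n + 1)) (by positivity)
  obtain ⟨y, -, k, hk, hy⟩ := hK.tendsto_subseq fun n ↦ hφK (x n)
  have hdist : Filter.Tendsto (fun n ↦ dist (x n) (φ (x n))) Filter.atTop (nhds 0) :=
    squeeze_zero (fun _ ↦ dist_nonneg) hx tendsto_one_div_add_atTop_nhds_zero_nat
  have hxy : Filter.Tendsto (x ∘ k) Filter.atTop (nhds y) :=
    (tendsto_iff_of_dist (hdist.comp hk.tendsto_atTop)).2 hy
  exact ⟨y, tendsto_nhds_unique ((hφ.tendsto y).comp hxy) hy⟩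

section Brouwer

open MeasureTheory Measure Module
open scoped NNReal

theorem image_eq_self_of_eqOn_compl {α : Type*} {f : α → α} {s : Set α}
    (hf : Function.Bijective f) (hs : EqOn f id sᶜ) : f '' s = s := by
  rw [← compl_inj_iff, ← image_compl_eq hf, hs.image_eq, image_id]

theorem bijective_id_add_of_lipschitzWith_lt_one {E : Type*} [NormedAddCommGroup E]
    [CompleteSpace E] {g : E → E} {K : ℝ≥0} (hg : LipschitzWith K g) (hK : K < 1) :
    Function.Bijective fun x ↦ x + g x := by
  refine Function.bijective_iff_existsUnique _ |>.2 fun y ↦ ?_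
  have hc : ContractingWith K fun x ↦ y - g x :=
    ⟨hK, .of_dist_le_mul fun a b ↦ by rw [dist_sub_left]; exact hg.dist_le_mul a b⟩
  have fixed_iff (x : E) : Function.IsFixedPt (fun x ↦ y - g x) x ↔ x + g x = y := by
    rw [Function.IsFixedPt, sub_eq_iff_eq_add, eq_comm]
  exact ⟨hc.fixedPoint, (fixed_iff _).1 hc.fixedPoint_isFixedPt,
    fun x hx ↦ hc.fixedPoint_unique ((fixed_iff x).2 hx)⟩

variable {E : Type*} [NormedAddCommGroup E] [InnerProductSpace ℝ E] [FiniteDimensional ℝ E]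

section Volume

variable [MeasurableSpace E] [BorelSpace E]

theorem lintegral_abs_det_fderiv_eq_measure_image_of_lipschitzWith {f : E → E} {K : ℝ≥0}
    (hf : LipschitzWith K f) (hinj : Function.Injective f) {s : Set E} (hs : MeasurableSet s) :
    ∫⁻ x in s, ENNReal.ofReal |(fderiv ℝ f x).det| ∂μH[finrank ℝ E] =
      μH[finrank ℝ E] (f '' s) := by
  set D : Set E := {x | DifferentiableAt ℝ f x}
  have null_compl : μH[finrank ℝ E] Dᶜ = 0 := hf.ae_differentiableAt
  have null_image : μH[finrank ℝ E] (f '' (s \ D)) = 0 := by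
    refine le_antisymm ((hf.hausdorffMeasure_image_le (by positivity) _).trans ?_) bot_le
    rw [measure_mono_null (fun x hx ↦ hx.2) null_compl, mul_zero]
  have image_ae : f '' (s ∩ D) =ᵐ[μH[finrank ℝ E]] f '' s := by
    rw [← inter_union_sdiff s D, image_union, inter_union_sdiff]
    exact (union_ae_eq_left_of_ae_eq_empty (ae_eq_empty.2 null_image)).symm
  have inter_ae : (s ∩ D : Set E) =ᵐ[μH[finrank ℝ E]] s :=
    inter_ae_eq_left_of_ae_eq_univ (ae_eq_univ.2 null_compl)
  rw [← setLIntegral_congr inter_ae, ← measure_congr image_ae]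
  exact lintegral_abs_det_fderiv_eq_addHaar_image _
    (hs.inter (measurableSet_of_differentiableAt ℝ f))
    (fun x hx ↦ hx.2.hasFDerivAt.hasFDerivWithinAt) hinj.injOn

theorem integral_det_one_add_fderiv_of_lipschitzWith_lt_one {g : E → E} {K : ℝ≥0}
    (hg : LipschitzWith K g) (hK : K < 1) {s : Set E} (hs : MeasurableSet s)
    (hfin : μH[finrank ℝ E] s ≠ ⊤) (hgs : ∀ x ∉ s, g x = 0) :
    IntegrableOn (fun x ↦ (1 + fderiv ℝ g x).det) s μH[finrank ℝ E] ∧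
      ∫ x in s, (1 + fderiv ℝ g x).det ∂μH[finrank ℝ E] = μH[finrank ℝ E].real s := by
  have := FiniteDimensional.complete ℝ E
  have hbij := bijective_id_add_of_lipschitzWith_lt_one hg hK
  have det_pos (x : E) : 0 < (1 + fderiv ℝ g x).det :=
    det_one_add_pos_of_norm_lt_one ((norm_fderiv_le_of_lipschitz ℝ hg).trans_lt hK)
  have measurable_det : Measurable fun x ↦ (1 + fderiv ℝ g x).det :=
    (ContinuousLinearMap.continuous_det.comp
      (continuous_const.add continuous_id)).measurable.comp (measurable_fderiv ℝ g)
  have image_s : (fun x ↦ x + g x) '' s = s :=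
    image_eq_self_of_eqOn_compl hbij fun x hx ↦ by simp [hgs x hx]
  have hlintegral : ∫⁻ x in s, ENNReal.ofReal (1 + fderiv ℝ g x).det ∂μH[finrank ℝ E] =
      μH[finrank ℝ E] s := by
    have hlip : LipschitzWith (1 + K) fun x ↦ x + g x := LipschitzWith.id.add hg
    rw [← congrArg μH[finrank ℝ E] image_s,
      ← lintegral_abs_det_fderiv_eq_measure_image_of_lipschitzWith hlip hbij.injective hs]
    refine setLIntegral_congr_fun_ae hs ?_
    filter_upwards [hg.ae_differentiableAt] with x hx _
    have hderiv : HasFDerivAt (fun x ↦ x + g x) (1 + fderiv ℝ g x) x :=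
      (hasFDerivAt_id x).add hx.hasFDerivAt
    rw [hderiv.fderiv, abs_of_pos (det_pos x)]
  have det_nonneg : ∀ᵐ x ∂μH[finrank ℝ E].restrict s, 0 ≤ (1 + fderiv ℝ g x).det :=
    .of_forall fun x ↦ (det_pos x).le
  refine ⟨⟨measurable_det.aestronglyMeasurable, ?_⟩, ?_⟩
  · rw [hasFiniteIntegral_iff_ofReal det_nonneg, hlintegral]
    exact hfin.lt_top
  · rw [integral_eq_lintegral_of_nonneg_ae det_nonneg measurable_det.aestronglyMeasurable,
      hlintegral, measureReal_def]

theorem integral_det_one_add_fderiv_of_lipschitzWith {g : E → E} {K : ℝ≥0}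
    (hg : LipschitzWith K g) {s : Set E} (hs : MeasurableSet s)
    (hfin : μH[finrank ℝ E] s ≠ ⊤) (hgs : ∀ x ∉ s, g x = 0) :
    ∫ x in s, (1 + fderiv ℝ g x).det ∂μH[finrank ℝ E] = μH[finrank ℝ E].real s := by
  classical
  obtain ⟨I, hI, hcard⟩ :=
    (Ioo_infinite (show (0 : ℝ) < ((K : ℝ) + 1)⁻¹ by positivity)).exists_subset_card_eq
      (finrank ℝ E + 1)
  have node (t : ℝ) (ht : t ∈ I) :
      IntegrableOn (fun x ↦ (1 + t • fderiv ℝ g x).det) s μH[finrank ℝ E] ∧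
        ∫ x in s, (1 + t • fderiv ℝ g x).det ∂μH[finrank ℝ E] = μH[finrank ℝ E].real s := by
    obtain ⟨ht0, htK⟩ := hI ht
    have hKt : ‖t‖₊ * K < 1 := by
      rw [← NNReal.coe_lt_coe, NNReal.coe_mul, coe_nnnorm, Real.norm_of_nonneg ht0.le]
      rw [lt_inv_comm₀ ht0 (by positivity), ← one_div, lt_div_iff₀ ht0] at htK
      linarith [NNReal.coe_one]
    have fderiv_smul (x : E) : fderiv ℝ (fun x ↦ t • g x) x = t • fderiv ℝ g x :=
      congrFun (fderiv_const_smul_field (f := g) t) x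
    have htg : LipschitzWith (‖t‖₊ * K) fun x ↦ t • g x := (lipschitzWith_smul t).comp hg
    simpa only [fderiv_smul] using integral_det_one_add_fderiv_of_lipschitzWith_lt_one htg hKt hs
      hfin fun x hx ↦ by rw [hgs x hx, smul_zero]
  have interpolation (x : E) : (1 + fderiv ℝ g x).det =
      ∑ i ∈ I, (Lagrange.basis I id i).eval 1 * (1 + i • fderiv ℝ g x).det := by
    have h := det_one_add_smul_eq_sum_lagrange (s := I) (by omega) (fderiv ℝ g x : E →ₗ[ℝ] E) 1
    rwa [one_smul] at h
  have sum_weights : ∑ i ∈ I, (Lagrange.basis I id i).eval 1 = 1 := by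
    rw [← Polynomial.eval_finsetSum,
      Lagrange.sum_basis (injOn_id _) (Finset.card_pos.1 (by omega)), Polynomial.eval_one]
  simp_rw [interpolation]
  rw [integral_finsetSum _ fun i hi ↦ (node i hi).1.const_mul _]
  simp_rw [integral_const_mul]
  rw [Finset.sum_congr rfl fun i hi ↦ by rw [(node i hi).2], ← Finset.sum_mul, sum_weights,
    one_mul]

end Volume

theorem exists_norm_ne_of_lipschitzWith_of_eq_id {f : E → E} {K : ℝ≥0} {R : ℝ} (hR : 0 < R)
    (hf : LipschitzWith K f) (hid : ∀ x, R ≤ ‖x‖ → f x = x) :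
    ∃ x ∈ ball (0 : E) R, ‖f x‖ ≠ R := by
  borelize E
  by_contra! hnorm
  have hg : LipschitzWith (K + 1) fun x ↦ f x - x := hf.sub LipschitzWith.id
  have hvol : ∫ x in ball (0 : E) R, (1 + fderiv ℝ (fun x ↦ f x - x) x).det ∂μH[finrank ℝ E] =
      μH[finrank ℝ E].real (ball (0 : E) R) :=
    integral_det_one_add_fderiv_of_lipschitzWith hg measurableSet_ball measure_ball_lt_top.ne
      fun x hx ↦ by rw [hid x (by simpa using hx), sub_self]
  have hzero : ∫ x in ball (0 : E) R,
      (1 + fderiv ℝ (fun x ↦ f x - x) x).det ∂μH[finrank ℝ E] = 0 := by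
    refine setIntegral_eq_zero_of_ae_eq_zero ?_
    filter_upwards [hf.ae_differentiableAt] with x hx hxR
    have hderiv : HasFDerivAt (fun x ↦ f x - x) (fderiv ℝ f x - 1) x :=
      hx.hasFDerivAt.sub (hasFDerivAt_id x)
    rw [hderiv.fderiv, add_sub_cancel]
    exact det_eq_zero_of_norm_eventually_const hx.hasFDerivAt hR.ne'
      (Filter.eventually_of_mem (isOpen_ball.mem_nhds hxR) hnorm)
  have hpos : 0 < μH[finrank ℝ E].real (ball (0 : E) R) :=
    ENNReal.toReal_pos (measure_ball_pos _ 0 hR).ne' measure_ball_lt_top.ne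
  exact hpos.ne (hzero.symm.trans hvol)

theorem exists_eq_zero_of_lipschitzWith_of_eq_id {f : E → E} {K : ℝ≥0} {R : ℝ} (hR : 0 < R)
    (hf : LipschitzWith K f) (hid : ∀ x, R ≤ ‖x‖ → f x = x) : ∃ x, f x = 0 := by
  by_contra! hne
  have hball : (closedBall (0 : E) R).Nonempty := nonempty_closedBall.2 hR.le
  obtain ⟨x₀, -, hmin⟩ := (isCompact_closedBall (0 : E) R).exists_isMinOn hball
    hf.continuous.norm.continuousOn
  obtain ⟨x₁, -, hmax⟩ := (isCompact_closedBall (0 : E) R).exists_isMaxOn hball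
    hf.continuous.norm.continuousOn
  set c := min ‖f x₀‖ R
  set C := max ‖f x₁‖ R
  have hc : 0 < c := lt_min (norm_pos_iff.2 (hne x₀)) hR
  have hcR : c ≤ R := min_le_right _ _
  have hRC : R ≤ C := le_max_right _ _
  have hC : 0 < C := hR.trans_le hRC
  have norm_f_mem (x : E) (hx : ‖x‖ ≤ C) : ‖f x‖ ∈ Icc c C := by
    obtain h | h := le_total ‖x‖ R
    · exact ⟨(min_le_left _ _).trans (hmin (mem_closedBall_zero_iff.2 h)),
        (hmax (mem_closedBall_zero_iff.2 h)).trans (le_max_left _ _)⟩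
    · rw [hid x h]
      exact ⟨hcR.trans h, hx⟩
  obtain ⟨_, ρ, hρ, ρ_outside, norm_ρ_annulus⟩ :=
    exists_lipschitzWith_norm_eq_of_mem_annulus (E := E) hc (hcR.trans hRC)
  obtain ⟨x, hx, hxC⟩ := exists_norm_ne_of_lipschitzWith_of_eq_id hC (hρ.comp hf) fun x hx ↦ by
    rw [Function.comp_apply, hid x (hRC.trans hx), ρ_outside x hx]
  exact hxC (norm_ρ_annulus _ (norm_f_mem x (mem_ball_zero_iff.1 hx).le))

theorem exists_isFixedPt_of_isBounded_range {P : E → E} (hP : Continuous P)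
    (hb : Bornology.IsBounded (range P)) : ∃ x, Function.IsFixedPt P x := by
  obtain ⟨M, hM0, hM⟩ := hb.exists_pos_norm_le
  simp only [forall_mem_range] at hM
  refine exists_isFixedPt_of_forall_exists_dist_le hP (isCompact_closedBall (0 : E) M)
    (fun x ↦ mem_closedBall_zero_iff.2 (hM x)) fun ε hε ↦ ?_
  wlog hε1 : ε ≤ 1 generalizing ε
  · exact (this 1 one_pos le_rfl).imp fun x hx ↦ hx.trans (le_of_not_ge hε1)
  let χ : ContDiffBump (0 : E) := ⟨M + 1, M + 2, by positivity, by linarith⟩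
  have hcut : HasCompactSupport fun x ↦ χ x • P x := χ.hasCompactSupport.smul_right
  obtain ⟨q, hq, hqP⟩ := (hcut.uniformContinuous_of_continuous
    (χ.continuous.smul hP)).exists_contDiff_dist_le hε
  have hχq : ContDiff ℝ 1 fun x ↦ χ x • q x := χ.contDiff.smul (hq.of_le (by norm_cast))
  obtain ⟨K, hK⟩ := hχq.lipschitzWith_of_hasCompactSupport
    χ.hasCompactSupport.smul_right one_ne_zero
  obtain ⟨x, hx⟩ := exists_eq_zero_of_lipschitzWith_of_eq_id (R := M + 2) (by positivity)
    (LipschitzWith.id.sub hK) fun x hx ↦ by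
      simp [χ.zero_of_le_dist (show M + 2 ≤ dist x 0 by simpa using hx)]
  have hx : x = χ x • q x := sub_eq_zero.1 hx
  have norm_χ_smul_le (y : E) : ‖χ x • y‖ ≤ ‖y‖ := by
    rw [norm_smul, Real.norm_of_nonneg χ.nonneg]
    exact mul_le_of_le_one_left (norm_nonneg _) χ.le_one
  have norm_x : ‖x‖ ≤ M + 1 := calc
    ‖x‖ ≤ ‖q x‖ := (congrArg norm hx).trans_le (norm_χ_smul_le _)
    _ ≤ ‖χ x • P x‖ + dist (q x) (χ x • P x) := by
        rw [dist_comm, dist_eq_norm]; exact norm_le_norm_add_norm_sub _ _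
    _ ≤ M + 1 := add_le_add ((norm_χ_smul_le _).trans (hM x)) ((hqP x).le.trans hε1)
  have χ_eq_one : χ x = 1 := χ.one_of_mem_closedBall (mem_closedBall_zero_iff.2 norm_x)
  refine ⟨x, ?_⟩
  have := (hqP x).le
  rw [χ_eq_one, one_smul] at hx this
  rwa [← hx] at this

end Brouwer

theorem exists_partitionOfUnity_dist_sum_smul_le {X : Type*} [NormedAddCommGroup X]
    [NormedSpace ℝ X] {K : Set X} (hK : IsCompact K) {ε : ℝ} (hε : 0 < ε) :
    ∃ (s : Finset X) (w : PartitionOfUnity s X K),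
      ∀ z ∈ K, dist (∑ i, w i z • (i : X)) z < ε := by
  obtain ⟨s, -, hs, hKs⟩ := hK.finite_cover_balls hε
  lift s to Finset X using hs
  obtain ⟨w, hw⟩ := PartitionOfUnity.exists_isSubordinate hK.isClosed
    (fun i : s ↦ ball (i : X) ε) (fun _ ↦ isOpen_ball) (by simpa [iUnion_subtype] using hKs)
  refine ⟨s, w, fun z hz ↦ mem_ball.1 ?_⟩
  rw [← finsum_eq_sum_of_fintype]
  refine w.finsum_smul_mem_convex (g := fun i _ ↦ (i : X)) hz (fun i hi ↦ ?_) (convex_ball z ε)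
  exact mem_ball_comm.1 (hw i (subset_closure hi))

theorem exists_isFixedPt_of_mem_isCompact {X : Type*} [NormedAddCommGroup X] [NormedSpace ℝ X]
    {φ : X → X} {K : Set X} (hφ : Continuous φ) (hK : IsCompact K) (hφK : ∀ x, φ x ∈ K) :
    ∃ x, Function.IsFixedPt φ x := by
  refine exists_isFixedPt_of_forall_exists_dist_le hφ hK hφK fun ε hε ↦ ?_
  obtain ⟨s, w, hw⟩ := exists_partitionOfUnity_dist_sum_smul_le hK hε
  let combine (c : EuclideanSpace ℝ s) : X := ∑ i, c i • (i : X)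
  let weights (z : X) : EuclideanSpace ℝ s := WithLp.toLp 2 fun i ↦ w i z
  have continuous_combine : Continuous combine := by fun_prop
  have continuous_weights : Continuous weights := by fun_prop
  have weights_mem (z : X) : weights z ∈ WithLp.toLp 2 '' Icc (0 : s → ℝ) 1 :=
    mem_image_of_mem _ ⟨fun i ↦ w.nonneg i z, fun i ↦ w.le_one i z⟩
  obtain ⟨c, hc⟩ := exists_isFixedPt_of_isBounded_range
    (continuous_weights.comp (hφ.comp continuous_combine))
    ((isCompact_Icc.image (PiLp.continuous_toLp 2 _)).isBounded.subset
      (range_subset_iff.2 fun c ↦ weights_mem _))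
  refine ⟨combine c, ?_⟩
  have combine_eq : combine (weights (φ (combine c))) = combine c := congrArg combine hc
  calc dist (combine c) (φ (combine c))
      = dist (combine (weights (φ (combine c)))) (φ (combine c)) := by rw [combine_eq]
    _ ≤ ε := (hw _ (hφK _)).le

section BoundedField

open scoped NNReal

variable {E : Type*} [NormedAddCommGroup E] [NormedSpace ℝ E]

theorem isCompact_setOf_lipschitzWith_and_forall_mem {X Y : Type*} [PseudoMetricSpace X]
    [MetricSpace Y] (L : ℝ≥0) {K : Set Y} (hK : IsCompact K) :
    IsCompact {v : C(X, Y) | LipschitzWith L v ∧ ∀ x, v x ∈ K} := by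
  refine ArzelaAscoli.isCompact_of_equicontinuous _ ?_
    (LipschitzWith.uniformEquicontinuous _ L fun v ↦ v.2.1).equicontinuous
  have image_eq : ContinuousMap.toFun '' {v : C(X, Y) | LipschitzWith L v ∧ ∀ x, v x ∈ K} =
      {g : X → Y | LipschitzWith L g} ∩ univ.pi fun _ ↦ K := by
    ext g
    constructor
    · rintro ⟨v, hv, rfl⟩
      exact ⟨hv.1, fun x _ ↦ hv.2 x⟩
    · rintro ⟨hg, hgK⟩
      exact ⟨⟨g, hg.continuous⟩, ⟨hg, fun x ↦ hgK x trivial⟩, rfl⟩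
  rw [image_eq]
  exact (isCompact_univ_pi fun _ ↦ hK).inter_left (isClosed_setOfPred_lipschitzWith L)

theorem lipschitzWith_picard {F : ℝ → E → E} (hF : Continuous (Function.uncurry F)) {L : ℝ≥0}
    (hL : ∀ t x, ‖F t x‖ ≤ L) {α : ℝ → E} (hα : Continuous α) (t₀ : ℝ) (x₀ : E) :
    LipschitzWith L (ODE.picard F t₀ x₀ α) := by
  have hc : Continuous fun τ ↦ F τ (α τ) := hF.comp₂ continuous_id hα
  refine .of_dist_le_mul fun s t ↦ ?_
  rw [dist_eq_norm, Real.dist_eq, ODE.picard_apply, ODE.picard_apply, add_sub_add_left_eq_sub,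
    intervalIntegral.integral_interval_sub_left (hc.intervalIntegrable _ _)
      (hc.intervalIntegrable _ _)]
  exact intervalIntegral.norm_integral_le_of_norm_le_const fun τ _ ↦ hL τ (α τ)

theorem hasDerivAt_picard [CompleteSpace E] {F : ℝ → E → E}
    (hF : Continuous (Function.uncurry F)) {α : ℝ → E} (hα : Continuous α) (t₀ : ℝ) (x₀ : E)
    (t : ℝ) : HasDerivAt (ODE.picard F t₀ x₀ α) (F t (α t)) t :=
  ((hF.comp₂ continuous_id hα).integral_hasStrictDerivAt t₀ t).hasDerivAt.const_add x₀

theorem continuous_picard {Z : Type*} [TopologicalSpace Z] {F : ℝ → E → E}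
    (hF : Continuous (Function.uncurry F)) (t₀ : ℝ) {x₀ : Z → E} (hx₀ : Continuous x₀)
    {α : Z → ℝ → E} (hα : Continuous (Function.uncurry α)) {t : Z → ℝ} (ht : Continuous t) :
    Continuous fun z ↦ ODE.picard F t₀ (x₀ z) (α z) (t z) :=
  hx₀.add <| intervalIntegral.continuous_parametric_intervalIntegral_of_continuous
    (f := fun z τ ↦ F τ (α z τ)) (hF.comp₂ continuous_snd hα) ht

theorem exists_hasDerivAt_of_bounded_of_isBounded_range [FiniteDimensional ℝ E] {T : ℝ}
    (hT : 0 ≤ T) {F : ℝ → E → E} (hF : Continuous (Function.uncurry F)) {L : ℝ}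
    (hL : ∀ t x, ‖F t x‖ ≤ L) {π : E → E} (hπ : Continuous π)
    (hπb : Bornology.IsBounded (range π)) :
    ∃ u : ℝ → E, u 0 = π (u T) ∧ ∀ t ∈ Icc 0 T, HasDerivAt u (F t (u t)) t := by
  have : CompleteSpace E := FiniteDimensional.complete ℝ E
  have : ProperSpace E := FiniteDimensional.proper_real E
  lift L to ℝ≥0 using (norm_nonneg _).trans (hL 0 0)
  have T_mem : T ∈ Icc 0 T := right_mem_Icc.2 hT
  let curve (v : C(Icc 0 T, E)) : ℝ → E :=
    ODE.picard F 0 (π (v ⟨T, T_mem⟩)) (IccExtend hT v)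
  have lipschitz_curve (v : C(Icc 0 T, E)) : LipschitzWith L (curve v) :=
    lipschitzWith_picard hF hL v.continuous.Icc_extend' _ _
  let Φ (v : C(Icc 0 T, E)) : C(Icc 0 T, E) :=
    ⟨fun t ↦ curve v t, (lipschitz_curve v).continuous.comp continuous_subtype_val⟩
  have continuous_Φ : Continuous Φ := by
    refine ContinuousMap.continuous_of_continuous_uncurry Φ ?_
    have extension : Continuous fun q : (C(Icc 0 T, E) × Icc 0 T) × ℝ ↦
        IccExtend hT q.1.1 q.2 :=
      (continuous_fst.comp continuous_fst).eval (continuous_projIcc.comp continuous_snd)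
    exact continuous_picard hF 0 (hπ.comp (continuous_fst.eval continuous_const)) extension
      (continuous_subtype_val.comp continuous_snd)
  have Φ_mem (v : C(Icc 0 T, E)) :
      Φ v ∈ {w : C(Icc 0 T, E) | LipschitzWith L w ∧ ∀ t, w t ∈ cthickening (L * T)
        (closure (range π))} := by
    refine ⟨(lipschitz_curve v).comp (.subtype_val _) |>.weaken (by simp), fun t ↦ ?_⟩
    refine mem_cthickening_of_dist_le _ (curve v 0) _ _ (subset_closure ?_)
      (((lipschitz_curve v).dist_le_mul _ _).trans ?_)
    · simp [curve]
    · gcongr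
      exact (Real.dist_le_of_mem_Icc t.2 (left_mem_Icc.2 hT)).trans_eq (sub_zero T)
  obtain ⟨v, hv⟩ := exists_isFixedPt_of_mem_isCompact continuous_Φ
    (isCompact_setOf_lipschitzWith_and_forall_mem L hπb.isCompact_closure.cthickening) Φ_mem
  have curve_eq (t : ℝ) (ht : t ∈ Icc 0 T) : curve v t = v ⟨t, ht⟩ := congrArg (· ⟨t, ht⟩) hv
  refine ⟨curve v, ?_, fun t ht ↦ ?_⟩
  · rw [curve_eq T T_mem]
    exact ODE.picard_apply₀
  · rw [curve_eq t ht, ← IccExtend_of_mem hT v ht]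
    exact hasDerivAt_picard hF v.continuous.Icc_extend' _ _ t

end BoundedField

section StarShaped

variable {E : Type*} [NormedAddCommGroup E] [NormedSpace ℝ E] {G : Set E} {p u : E}

/-- Strict star-shapedness of `closure G` with respect to `p`: the half-open segments from `p` to
the boundary points of `G` are contained in `G`. -/
def StrictStarShapedAt (G : Set E) (p : E) : Prop :=
  ∀ u ∈ frontier G, ∀ θ : ℝ, 0 ≤ θ → θ < 1 → p + θ • (u - p) ∈ G

theorem exists_one_le_add_smul_sub_mem_frontier (hGb : Bornology.IsBounded G) (hu : u ∈ G)
    (hup : u ≠ p) : ∃ s : ℝ, 1 ≤ s ∧ p + s • (u - p) ∈ frontier G := by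
  have norm_pos : 0 < ‖u - p‖ := norm_pos_iff.2 (sub_ne_zero.2 hup)
  obtain ⟨C, hC⟩ := hGb.subset_closedBall p
  let ray (s : Ici (1 : ℝ)) : E := p + s.1 • (u - p)
  have continuous_ray : Continuous ray := by fun_prop
  have start_mem : (⟨1, self_mem_Ici⟩ : Ici (1 : ℝ)) ∈ ray ⁻¹' G := by simpa [ray] using hu
  have escape : ray ⁻¹' G ≠ univ := fun h ↦ by
    have far_mem : ray ⟨max 1 (C / ‖u - p‖ + 1), mem_Ici.2 (le_max_left _ _)⟩ ∈ closedBall p C :=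
      hC (h ▸ mem_univ _ : _ ∈ ray ⁻¹' G)
    rw [mem_closedBall, dist_eq_norm, add_sub_cancel_left, norm_smul, Real.norm_eq_abs,
      ← le_div_iff₀ norm_pos] at far_mem
    linarith [le_max_right 1 (C / ‖u - p‖ + 1), le_abs_self (max 1 (C / ‖u - p‖ + 1))]
  have : PreconnectedSpace (Ici (1 : ℝ)) := Subtype.preconnectedSpace isPreconnected_Ici
  obtain ⟨s, hs⟩ := nonempty_frontier_iff.2 ⟨⟨_, start_mem⟩, escape⟩
  exact ⟨s, s.2, continuous_ray.frontier_preimage_subset G hs⟩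

theorem StrictStarShapedAt.add_smul_sub_mem (h : StrictStarShapedAt G p)
    (hGb : Bornology.IsBounded G) (hp : p ∈ G) (hu : u ∈ closure G) {θ : ℝ} (hθ₀ : 0 ≤ θ)
    (hθ₁ : θ < 1) : p + θ • (u - p) ∈ G := by
  rw [closure_eq_self_union_frontier] at hu
  rcases hu with hu | hu
  · rcases eq_or_ne u p with rfl | hup
    · simpa using hp
    · obtain ⟨s, hs, hsu⟩ := exists_one_le_add_smul_sub_mem_frontier hGb hu hup
      have hs₀ : 0 < s := one_pos.trans_le hs
      have := h _ hsu (θ / s) (by positivity) ((div_lt_one hs₀).2 (hθ₁.trans_le hs))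
      rwa [add_sub_cancel_left, smul_smul, div_mul_cancel₀ _ hs₀.ne'] at this
  · exact h u hu θ hθ₀ hθ₁

theorem StrictStarShapedAt.preimage_add_left (h : StrictStarShapedAt G p) :
    StrictStarShapedAt ((p + ·) ⁻¹' G) 0 := fun z hz θ hθ₀ hθ₁ ↦ by
  have hz' : p + z ∈ frontier G := by
    rwa [← Homeomorph.coe_addLeft, ← Homeomorph.preimage_frontier] at hz
  simpa using h _ hz' θ hθ₀ hθ₁

namespace StrictStarShapedAt

variable {S : Set E} {x : E}

theorem gauge_lt_one_iff (hstar : StrictStarShapedAt S 0) (hS : IsOpen S)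
    (hSb : Bornology.IsBounded S) (h0 : 0 ∈ S) : gauge S x < 1 ↔ x ∈ S := by
  refine ⟨fun h ↦ ?_, gauge_lt_one_of_mem_of_isOpen hS⟩
  obtain ⟨b, hb₀, hb₁, s, hs, rfl⟩ :=
    exists_lt_of_gauge_lt (absorbent_nhds_zero (hS.mem_nhds h0)) h
  simpa using hstar.add_smul_sub_mem hSb h0 (subset_closure hs) hb₀.le hb₁

theorem gauge_le_one_iff (hstar : StrictStarShapedAt S 0) (hS : IsOpen S)
    (hSb : Bornology.IsBounded S) (h0 : 0 ∈ S) : gauge S x ≤ 1 ↔ x ∈ closure S := by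
  constructor <;> intro h
  · have hmaps : MapsTo (fun s : ℝ ↦ s • x) (Ico 0 1) S := fun s hs ↦ by
      rw [← hstar.gauge_lt_one_iff hS hSb h0, gauge_smul_of_nonneg hs.1, smul_eq_mul]
      exact (mul_le_of_le_one_right hs.1 h).trans_lt hs.2
    have one_mem : (1 : ℝ) ∈ closure (Ico 0 1) := by
      rw [closure_Ico zero_ne_one]; exact right_mem_Icc.2 zero_le_one
    simpa using map_mem_closure (by fun_prop) one_mem hmaps
  · by_contra! hlt
    have hmem := hstar.add_smul_sub_mem hSb h0 h (by positivity) (inv_lt_one_of_one_lt₀ hlt)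
    rw [zero_add, sub_zero, ← hstar.gauge_lt_one_iff hS hSb h0,
      gauge_smul_of_nonneg (by positivity), smul_eq_mul, inv_mul_cancel₀ (by positivity)] at hmem
    exact hmem.false

theorem gauge_eq_one_iff (hstar : StrictStarShapedAt S 0) (hS : IsOpen S)
    (hSb : Bornology.IsBounded S) (h0 : 0 ∈ S) : gauge S x = 1 ↔ x ∈ frontier S := by
  rw [hS.frontier_eq, mem_sdiff, ← hstar.gauge_le_one_iff hS hSb h0,
    ← hstar.gauge_lt_one_iff hS hSb h0, not_lt, le_antisymm_iff]

theorem continuous_gauge (hstar : StrictStarShapedAt S 0) (hS : IsOpen S)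
    (hSb : Bornology.IsBounded S) (h0 : 0 ∈ S) : Continuous (gauge S) := by
  have scale {c : ℝ} (hc : 0 < c) (x : E) : gauge S (c⁻¹ • x) = gauge S x / c := by
    rw [gauge_smul_of_nonneg (by positivity), smul_eq_mul, inv_mul_eq_div]
  refine continuous_iff_lower_upperSemicontinuous.2
    ⟨lowerSemicontinuous_iff_isClosed_preimage.2 fun c ↦ ?_,
      upperSemicontinuous_iff_isOpen_preimage.2 fun c ↦ ?_⟩
  · rcases lt_trichotomy c 0 with hc | rfl | hc
    · convert isClosed_empty
      exact eq_empty_of_forall_notMem fun x hx ↦ (hc.trans_le (gauge_nonneg x)).not_ge hx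
    · convert isClosed_singleton (x := (0 : E))
      ext x
      rw [mem_preimage, mem_Iic, ← not_lt, gauge_pos (absorbent_nhds_zero (hS.mem_nhds h0))
        (NormedSpace.isVonNBounded_of_isBounded ℝ hSb), not_not, mem_singleton_iff]
    · have preimage_eq : gauge S ⁻¹' Iic c = (c⁻¹ • ·) ⁻¹' closure S := by
        ext x
        rw [mem_preimage, mem_Iic, mem_preimage, ← hstar.gauge_le_one_iff hS hSb h0, scale hc,
          div_le_one₀ hc]
      exact preimage_eq ▸ isClosed_closure.preimage (continuous_const_smul c⁻¹)
  · rcases le_or_gt c 0 with hc | hc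
    · convert isOpen_empty
      exact eq_empty_of_forall_notMem fun x hx ↦ (hc.trans (gauge_nonneg x)).not_gt hx
    · have preimage_eq : gauge S ⁻¹' Iio c = (c⁻¹ • ·) ⁻¹' S := by
        ext x
        rw [mem_preimage, mem_Iio, mem_preimage, ← hstar.gauge_lt_one_iff hS hSb h0, scale hc,
          div_lt_one₀ hc]
      exact preimage_eq ▸ hS.preimage (continuous_const_smul c⁻¹)

end StrictStarShapedAt

end StarShaped

section OuterNormal

variable {E : Type*}

theorem posTangentConeAt_preimage_add_left [AddCommGroup E] [Module ℝ E] [TopologicalSpace E]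
    (G : Set E) (p z : E) :
    posTangentConeAt ((p + ·) ⁻¹' G) z = posTangentConeAt G (p + z) := by
  simp only [posTangentConeAt, tangentConeAt_def, preimage_preimage, add_assoc]

theorem neg_mem_posTangentConeAt_of_hasDerivWithinAt [NormedAddCommGroup E] [NormedSpace ℝ E]
    {K : Set E} {w : ℝ → E} {w' : E} {b : ℝ} (hw : HasDerivWithinAt w w' (Iio b) b)
    (hK : ∀ᶠ s in nhdsWithin b (Iio b), w s ∈ K) : -w' ∈ posTangentConeAt K (w b) := by
  refine mem_tangentConeAt_of_seq (nhdsWithin b (Iio b)) (fun s ↦ (b - s).toNNReal⁻¹)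
    (fun s ↦ w s - w b) ?_ (by simpa using hK) ?_
  · exact tendsto_sub_nhds_zero_iff.2 hw.continuousWithinAt
  · refine ((hasDerivWithinAt_iff_tendsto_slope' self_notMem_Iio).1 hw).neg.congr' ?_
    filter_upwards [self_mem_nhdsWithin] with s hs
    rw [NNReal.smul_def, NNReal.coe_inv, Real.coe_toNNReal _ (sub_nonneg.2 (mem_Iio.1 hs).le),
      slope_def_module, ← neg_smul, neg_inv, neg_sub]

variable [NormedAddCommGroup E] [InnerProductSpace ℝ E] {G : Set E} {u n p : E}

/-- `n` is an outer normal to `G` at `u`: a nonzero vector making an angle of at least `π / 2` with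
every direction tangent to `G` at `u`. -/
def IsOuterNormalAt (G : Set E) (u n : E) : Prop :=
  n ≠ 0 ∧ ∀ v ∈ posTangentConeAt G u, ⟪v, n⟫ ≤ 0

theorem isOuterNormalAt_preimage_add_left {z : E} :
    IsOuterNormalAt ((p + ·) ⁻¹' G) z n ↔ IsOuterNormalAt G (p + z) n := by
  simp only [IsOuterNormalAt, posTangentConeAt_preimage_add_left]

theorem isOuterNormalAt_gradient [CompleteSpace E] {V : E → ℝ} (hmax : IsLocalMaxOn V G u)
    (hgrad : gradient V u ≠ 0) : IsOuterNormalAt G u (gradient V u) := by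
  have hV : DifferentiableAt ℝ V u :=
    not_imp_comm.1 gradient_eq_zero_of_not_differentiableAt hgrad
  refine ⟨hgrad, fun v hv ↦ ?_⟩
  have := hmax.hasFDerivWithinAt_nonpos hV.hasGradientAt.hasFDerivAt.hasFDerivWithinAt hv
  rwa [InnerProductSpace.toDual_apply_apply, real_inner_comm] at this

theorem IsOuterNormalAt.inner_sub_pos {δ : ℝ} (hn : IsOuterNormalAt G u n) (hδ : 0 < δ)
    (hstar : ∀ q ∈ closedBall p δ, StrictStarShapedAt G q) (hu : u ∈ frontier G) :
    0 < ⟪u - p, n⟫ := by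
  have norm_pos : 0 < ‖n‖ := norm_pos_iff.2 hn.1
  set q := p + (δ / ‖n‖) • n with hq
  have q_mem : q ∈ closedBall p δ := by
    rw [mem_closedBall, dist_eq_norm, hq, add_sub_cancel_left, norm_smul, norm_div, norm_norm,
      Real.norm_of_nonneg hδ.le, div_mul_cancel₀ _ norm_pos.ne']
  have segment_subset : openSegment ℝ u q ⊆ G := by
    rw [openSegment_symm, openSegment_eq_image']
    rintro _ ⟨θ, ⟨hθ₀, hθ₁⟩, rfl⟩
    exact hstar q q_mem u hu θ hθ₀.le hθ₁
  have inner_nonpos : ⟪q - u, n⟫ ≤ 0 :=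
    hn.2 _ (sub_mem_posTangentConeAt_of_openSegment_subset segment_subset)
  have inner_eq : ⟪q - u, n⟫ = δ * ‖n‖ - ⟪u - p, n⟫ := by
    rw [hq, add_comm p, add_sub_assoc, inner_add_left, inner_smul_left, real_inner_self_eq_norm_sq,
      ← neg_sub u p, inner_neg_left, RCLike.conj_to_real, ← sub_eq_add_neg]
    field_simp
  linarith [mul_pos hδ norm_pos]

end OuterNormal

section DampedExtension

variable {E : Type*} [NormedAddCommGroup E] [NormedSpace ℝ E] {S : Set E} {T : ℝ}
  {f : ℝ → E → E}

/-- The extension to the whole space of a field `f` given on `closure S`: it is constant along the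
rays outside `S` up to a bounded term pointing towards the origin. -/
noncomputable def dampedExtension (S : Set E) (f : ℝ → E → E) (t : ℝ) (x : E) : E :=
  f t (gaugeRetraction S x) - (1 - (max 1 (gauge S x))⁻¹) • gaugeRetraction S x

theorem dampedExtension_of_gauge_le {t : ℝ} {x : E} (h : gauge S x ≤ 1) :
    dampedExtension S f t x = f t x := by
  simp [dampedExtension, gaugeRetraction_of_gauge_le h, h]

namespace StrictStarShapedAt

theorem gaugeRetraction_mem_closure (hstar : StrictStarShapedAt S 0) (hS : IsOpen S)
    (hSb : Bornology.IsBounded S) (h0 : 0 ∈ S) (x : E) : gaugeRetraction S x ∈ closure S :=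
  (hstar.gauge_le_one_iff hS hSb h0).1 (gauge_gaugeRetraction_le S x)

theorem continuous_dampedExtension_projIcc (hstar : StrictStarShapedAt S 0) (hS : IsOpen S)
    (hSb : Bornology.IsBounded S) (h0 : 0 ∈ S) (hT : 0 ≤ T)
    (hf : ContinuousOn (Function.uncurry f) (Icc 0 T ×ˢ closure S)) :
    Continuous (Function.uncurry fun t x ↦ dampedExtension S f (projIcc 0 T hT t) x) := by
  have gauge_cont := hstar.continuous_gauge hS hSb h0
  have retraction_cont := (continuous_gaugeRetraction gauge_cont).comp (continuous_snd (X := ℝ))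
  have damping_cont : Continuous fun q : ℝ × E ↦ 1 - (max 1 (gauge S q.2))⁻¹ :=
    continuous_const.sub ((continuous_const.max (gauge_cont.comp continuous_snd)).inv₀
      fun q ↦ by positivity)
  refine (hf.comp_continuous (Continuous.prodMk ?_ retraction_cont) fun q ↦ ?_).sub
    (damping_cont.smul retraction_cont)
  · exact continuous_subtype_val.comp ((continuous_projIcc (h := hT)).comp continuous_fst)
  · exact ⟨Subtype.coe_prop _, hstar.gaugeRetraction_mem_closure hS hSb h0 q.2⟩

theorem exists_norm_dampedExtension_le [ProperSpace E] (hstar : StrictStarShapedAt S 0)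
    (hS : IsOpen S) (hSb : Bornology.IsBounded S) (h0 : 0 ∈ S)
    (hf : ContinuousOn (Function.uncurry f) (Icc 0 T ×ˢ closure S)) :
    ∃ L, ∀ t ∈ Icc 0 T, ∀ x, ‖dampedExtension S f t x‖ ≤ L := by
  obtain ⟨M, hM⟩ := (isCompact_Icc.prod hSb.isCompact_closure).exists_bound_of_continuousOn hf
  obtain ⟨C, hC⟩ := hSb.closure.exists_norm_le
  refine ⟨M + 1 * C, fun t ht x ↦ (norm_sub_le _ _).trans ?_⟩
  have retraction_mem := hstar.gaugeRetraction_mem_closure hS hSb h0 x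
  have damping_le : ‖1 - (max 1 (gauge S x))⁻¹‖ ≤ 1 := by
    have : (max 1 (gauge S x))⁻¹ ≤ 1 := inv_le_one_of_one_le₀ (le_max_left _ _)
    rw [Real.norm_of_nonneg (sub_nonneg.2 this), sub_le_self_iff]
    positivity
  rw [norm_smul]
  gcongr
  · exact hM (t, _) ⟨ht, retraction_mem⟩
  · exact hC _ retraction_mem

end StrictStarShapedAt

end DampedExtension

section PeriodicSolution

variable {E : Type*} [NormedAddCommGroup E] [InnerProductSpace ℝ E] {S : Set E} {T : ℝ}
  {f : ℝ → E → E}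

theorem IsOuterNormalAt.inner_deriv_nonneg {G : Set E} {w : ℝ → E} {w' n : E} {b : ℝ}
    (hn : IsOuterNormalAt G (w b) n) (hw : HasDerivWithinAt w w' (Iio b) b)
    (hG : ∀ᶠ s in nhdsWithin b (Iio b), w s ∈ closure G) : 0 ≤ ⟪w', n⟫ := by
  have h := neg_mem_posTangentConeAt_of_hasDerivWithinAt hw hG
  rw [posTangentConeAt, tangentConeAt_closure] at h
  simpa [inner_neg_left] using hn.2 _ h

namespace StrictStarShapedAt

theorem gauge_le_one_of_eventually_gauge_le (hstar : StrictStarShapedAt S 0) (hS : IsOpen S)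
    (hSb : Bornology.IsBounded S) (h0 : 0 ∈ S) {x : ℝ → E} {b : ℝ}
    (hx : HasDerivAt x (dampedExtension S f b (x b)) b)
    (hmax : ∀ᶠ s in nhdsWithin b (Iio b), gauge S (x s) ≤ gauge S (x b))
    (hf : ∀ u ∈ frontier S, ∃ n, IsOuterNormalAt S u n ∧ 0 < ⟪u, n⟫ ∧ ⟪f b u, n⟫ ≤ 0) :
    gauge S (x b) ≤ 1 := by
  by_contra! hb
  set c := gauge S (x b)
  have c_pos : 0 < c := one_pos.trans hb
  set u := gaugeRetraction S (x b)
  have u_eq : c⁻¹ • x b = u := (gaugeRetraction_of_le_gauge hb.le).symm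
  obtain ⟨n, hn, hun, hfn⟩ := hf u <|
    (hstar.gauge_eq_one_iff hS hSb h0).1 (gauge_gaugeRetraction_of_le_gauge hb.le)
  have scaled_mem : ∀ᶠ s in nhdsWithin b (Iio b), c⁻¹ • x s ∈ closure S := hmax.mono fun s hs ↦ by
    rw [← hstar.gauge_le_one_iff hS hSb h0, gauge_smul_of_nonneg (by positivity), smul_eq_mul]
    exact inv_mul_le_one_of_le₀ hs c_pos.le
  have nonneg : 0 ≤ c⁻¹ * ⟪dampedExtension S f b (x b), n⟫ := by
    rw [← real_inner_smul_left]
    exact IsOuterNormalAt.inner_deriv_nonneg (w := fun s ↦ c⁻¹ • x s) (by rwa [u_eq])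
      (hx.const_smul c⁻¹).hasDerivWithinAt scaled_mem
  have neg : ⟪dampedExtension S f b (x b), n⟫ < 0 := by
    rw [dampedExtension, max_eq_right hb.le, inner_sub_left, real_inner_smul_left]
    linarith [mul_pos (sub_pos.2 (inv_lt_one_of_one_lt₀ hb)) hun]
  exact (mul_neg_of_pos_of_neg (inv_pos.2 c_pos) neg).not_ge nonneg

theorem gauge_le_one_of_hasDerivAt_dampedExtension (hstar : StrictStarShapedAt S 0) (hS : IsOpen S)
    (hSb : Bornology.IsBounded S) (h0 : 0 ∈ S) {x : ℝ → E}
    (hx : ∀ t ∈ Icc 0 T, HasDerivAt x (dampedExtension S f t (x t)) t)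
    (hx₀ : gauge S (x 0) ≤ 1)
    (hf : ∀ u ∈ frontier S, ∀ t ∈ Icc 0 T,
      ∃ n, IsOuterNormalAt S u n ∧ 0 < ⟪u, n⟫ ∧ ⟪f t u, n⟫ ≤ 0) :
    ∀ t ∈ Icc 0 T, gauge S (x t) ≤ 1 := by
  intro t ht
  obtain ⟨b, hb, hmax⟩ := isCompact_Icc.exists_isMaxOn ⟨t, ht⟩
    ((hstar.continuous_gauge hS hSb h0).comp_continuousOn
      fun t ht ↦ (hx t ht).continuousAt.continuousWithinAt)
  refine (hmax ht).trans ?_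
  rcases hb.1.eq_or_lt with rfl | hb₀
  · exact hx₀
  · refine hstar.gauge_le_one_of_eventually_gauge_le hS hSb h0 (hx b hb) ?_ fun u hu ↦ hf u hu b hb
    filter_upwards [Ioo_mem_nhdsLT hb₀] with s hs
    exact hmax ⟨hs.1.le, hs.2.le.trans hb.2⟩

theorem exists_periodic_solution [FiniteDimensional ℝ E] (hstar : StrictStarShapedAt S 0)
    (hS : IsOpen S) (hSb : Bornology.IsBounded S) (h0 : 0 ∈ S) (hT : 0 ≤ T)
    (hfc : ContinuousOn (Function.uncurry f) (Icc 0 T ×ˢ closure S))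
    (hf : ∀ u ∈ frontier S, ∀ t ∈ Icc 0 T,
      ∃ n, IsOuterNormalAt S u n ∧ 0 < ⟪u, n⟫ ∧ ⟪f t u, n⟫ ≤ 0) :
    ∃ x : ℝ → E, (∀ t ∈ Icc 0 T, HasDerivAt x (f t (x t)) t) ∧ x 0 = x T ∧
      ∀ t ∈ Icc 0 T, x t ∈ closure S := by
  have : ProperSpace E := FiniteDimensional.proper_real E
  obtain ⟨L, hL⟩ := hstar.exists_norm_dampedExtension_le hS hSb h0 hfc
  obtain ⟨x, hx₀, hx⟩ := exists_hasDerivAt_of_bounded_of_isBounded_range hT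
    (hstar.continuous_dampedExtension_projIcc hS hSb h0 hT hfc)
    (fun t ↦ hL _ (projIcc 0 T hT t).2)
    (continuous_gaugeRetraction (hstar.continuous_gauge hS hSb h0))
    (hSb.closure.subset
      (range_subset_iff.2 (hstar.gaugeRetraction_mem_closure hS hSb h0)))
  have hx' (t : ℝ) (ht : t ∈ Icc 0 T) : HasDerivAt x (dampedExtension S f t (x t)) t := by
    simpa [projIcc_of_mem hT ht] using hx t ht
  have gauge_le := hstar.gauge_le_one_of_hasDerivAt_dampedExtension hS hSb h0 hx'
    (hx₀ ▸ gauge_gaugeRetraction_le S (x T)) hf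
  refine ⟨x, fun t ht ↦ ?_, ?_, fun t ht ↦ (hstar.gauge_le_one_iff hS hSb h0).1 (gauge_le t ht)⟩
  · exact dampedExtension_of_gauge_le (f := f) (gauge_le t ht) ▸ hx' t ht
  · rw [hx₀, gaugeRetraction_of_gauge_le (gauge_le T (right_mem_Icc.2 hT))]

end StrictStarShapedAt

theorem periodic_solution_star_shaped_bounding_functions_general [FiniteDimensional ℝ E]
    (hT : 0 ≤ T) {G : Set E} (hG : IsOpen G) (hGb : Bornology.IsBounded G)
    (hf : ContinuousOn (Function.uncurry f) (Icc 0 T ×ˢ closure G))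
    {p : E} {δ : ℝ} (hδ : 0 < δ) (hballG : closedBall p δ ⊆ G)
    (hstar : ∀ q ∈ closedBall p δ, StrictStarShapedAt G q)
    (hnormal : ∀ u ∈ frontier G, ∀ t ∈ Icc 0 T, ∃ n, IsOuterNormalAt G u n ∧ ⟪f t u, n⟫ ≤ 0) :
    ∃ y : ℝ → E, (∀ t ∈ Icc 0 T, HasDerivAt y (f t (y t)) t) ∧ y 0 = y T ∧
      ∀ t ∈ Icc 0 T, y t ∈ closure G := by
  have p_mem : p ∈ closedBall p δ := mem_closedBall_self hδ.le
  have closure_preimage : closure ((p + ·) ⁻¹' G) = (p + ·) ⁻¹' closure G :=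
    ((Homeomorph.addLeft p).preimage_closure G).symm
  have frontier_preimage : frontier ((p + ·) ⁻¹' G) = (p + ·) ⁻¹' frontier G :=
    ((Homeomorph.addLeft p).preimage_frontier G).symm
  have hf' : ContinuousOn (Function.uncurry fun t z ↦ f t (p + z))
      (Icc 0 T ×ˢ closure ((p + ·) ⁻¹' G)) :=
    hf.comp (f := Prod.map id (p + ·)) (by fun_prop) fun q hq ↦ ⟨hq.1, closure_preimage.le hq.2⟩
  have hnormal' : ∀ u ∈ frontier ((p + ·) ⁻¹' G), ∀ t ∈ Icc 0 T,
      ∃ n, IsOuterNormalAt ((p + ·) ⁻¹' G) u n ∧ 0 < ⟪u, n⟫ ∧ ⟪f t (p + u), n⟫ ≤ 0 := by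
    rw [frontier_preimage]
    intro u hu t ht
    obtain ⟨n, hn, hfn⟩ := hnormal _ hu t ht
    have inner_pos : 0 < ⟪p + u - p, n⟫ := hn.inner_sub_pos hδ hstar hu
    rw [add_sub_cancel_left] at inner_pos
    exact ⟨n, isOuterNormalAt_preimage_add_left.2 hn, inner_pos, hfn⟩
  obtain ⟨x, hx, hxT, hxG⟩ := (hstar p p_mem).preimage_add_left.exists_periodic_solution
    (hG.preimage (by fun_prop)) ((isometry_add_left p).antilipschitz.isBounded_preimage hGb)
    (by simpa using hballG p_mem) hT hf' hnormal'
  rw [closure_preimage] at hxG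
  exact ⟨(p + x ·), fun t ht ↦ (hx t ht).const_add p, congrArg (p + ·) hxT, hxG⟩

end PeriodicSolution

/-- Theorem for star-shaped domains. If `cl G` is strictly
star-shaped with respect to every point of a closed ball `B[p,δ] ⊆ G` and `(V_u)` is a
family of non-degenerate bounding functions for `G` with `⟪f(t,u), ∇V_u(u)⟫ ≤ 0` on
the boundary, then `ẏ = f(t,y)` has a `T`-periodic solution with values in `cl G`. -/
theorem periodic_solution_star_shaped_bounding_functions
    {N : ℕ} {T : ℝ} (hT : 0 < T)
    (Ω : Set (EuclideanSpace ℝ (Fin N))) (hΩ : IsOpen Ω)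
    (f : ℝ → EuclideanSpace ℝ (Fin N) → EuclideanSpace ℝ (Fin N))
    (hf : ContinuousOn (fun p : ℝ × EuclideanSpace ℝ (Fin N) => f p.1 p.2)
      (Icc (0 : ℝ) T ×ˢ Ω))
    (G : Set (EuclideanSpace ℝ (Fin N)))
    (hne : G.Nonempty) (hG : IsOpen G) (hGb : Bornology.IsBounded G)
    (hGΩ : closure G ⊆ Ω)
    (p : EuclideanSpace ℝ (Fin N)) (δ : ℝ) (hδ : 0 < δ)
    (hballG : closedBall p δ ⊆ G)
    (hstar : ∀ q ∈ closedBall p δ, ∀ u ∈ frontier G,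
      ∀ θ : ℝ, 0 ≤ θ → θ < 1 → q + θ • (u - q) ∈ G)
    (r : EuclideanSpace ℝ (Fin N) → ℝ)
    (V : EuclideanSpace ℝ (Fin N) → EuclideanSpace ℝ (Fin N) → ℝ)
    (hbd : ∀ u ∈ frontier G, 0 < r u ∧ ContDiffOn ℝ 1 (V u) (ball u (r u)) ∧
      V u u = 0 ∧ ∀ x ∈ G ∩ ball u (r u), V u x < 0)
    (hnondeg : ∃ ηm ηp : ℝ, 0 < ηm ∧ ηm ≤ ηp ∧ ∀ u ∈ frontier G,
      ηm ≤ ‖gradient (V u) u‖ ∧ ‖gradient (V u) u‖ ≤ ηp)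
    (hsub : ∀ u ∈ frontier G, ∀ t ∈ Icc (0 : ℝ) T,
      ⟪f t u, gradient (V u) u⟫ ≤ 0) :
    ∃ y : ℝ → EuclideanSpace ℝ (Fin N),
      (∀ t ∈ Icc (0 : ℝ) T, y t ∈ Ω) ∧
      (∀ t ∈ Icc (0 : ℝ) T, HasDerivWithinAt y (f t (y t)) (Icc (0 : ℝ) T) t) ∧
      y 0 = y T ∧
      (∀ t ∈ Icc (0 : ℝ) T, y t ∈ closure G) := by
  obtain ⟨ηm, _, hηm, _, hη⟩ := hnondeg
  have outer_normal (u) (hu : u ∈ frontier G) : IsOuterNormalAt G u (gradient (V u) u) := by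
    obtain ⟨hr, _, hVu, hVneg⟩ := hbd u hu
    refine isOuterNormalAt_gradient ?_ (norm_pos_iff.1 (hηm.trans_le (hη u hu).1))
    filter_upwards [inter_mem_nhdsWithin G (ball_mem_nhds u hr)] with x hx
    exact hVu ▸ (hVneg x hx).le
  obtain ⟨y, hy, hyT, hyG⟩ := periodic_solution_star_shaped_bounding_functions_general hT.le hG hGb
    (hf.mono (prod_mono_right hGΩ)) hδ hballG hstar
    fun u hu t ht ↦ ⟨_, outer_normal u hu, hsub u hu t ht⟩
  exact ⟨y, fun t ht ↦ hGΩ (hyG t ht), fun t ht ↦ (hy t ht).hasDerivWithinAt, hyT, hyG⟩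
end
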